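/- arXiv:2402.04943 — 12 statements merged into one kernel-verified Lean document; each statement's English description precedes it below -/
import Mathlib

section
/- Let X = ![![1,1],![0,1]] and Y = ![![1,0],![1,1]] be 2×2 integer matrices. The map sending a list of bits l : List Bool to the product of the corresponding matrices (false ↦ X, true ↦ Y), taken in order, is injective. Equivalently, two different words in X and Y (as positive products) are never equal as matrices, i.e., X and Y generate a free semigroup. -/
open Matrix

def X : Matrix (Fin 2) (Fin 2) ℤ := !![1, 1; 0, 1]
def Y : Matrix (Fin 2) (Fin 2) ℤ := !![1, 0; 1, 1]

def wordProd (l : List Bool) : Matrix (Fin 2) (Fin 2) ℤ :=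
  (l.map (fun b => if b then Y else X)).prod

lemma wordProd_nil : wordProd [] = 1 := rfl

lemma wordProd_false (l : List Bool) : wordProd (false :: l) = X * wordProd l := by
  simp [wordProd]

lemma wordProd_true (l : List Bool) : wordProd (true :: l) = Y * wordProd l := by
  simp [wordProd]

lemma X_mul_entries (M : Matrix (Fin 2) (Fin 2) ℤ) (j : Fin 2) :
    (X * M) 0 j = M 0 j + M 1 j ∧ (X * M) 1 j = M 1 j := by
  simp [X, Matrix.mul_apply, Fin.sum_univ_two]

lemma Y_mul_entries (M : Matrix (Fin 2) (Fin 2) ℤ) (j : Fin 2) :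
    (Y * M) 0 j = M 0 j ∧ (Y * M) 1 j = M 0 j + M 1 j := by
  simp [Y, Matrix.mul_apply, Fin.sum_univ_two]

/-- Both row sums of a word are positive. -/
lemma wordProd_pos (l : List Bool) :
    0 < wordProd l 0 0 + wordProd l 0 1 ∧ 0 < wordProd l 1 0 + wordProd l 1 1 := by
  induction l with
  | nil => simp [wordProd_nil]
  | cons b l ih =>
    cases b
    · rw [wordProd_false]
      have h0 := X_mul_entries (wordProd l) 0
      have h1 := X_mul_entries (wordProd l) 1
      omega
    · rw [wordProd_true]
      have h0 := Y_mul_entries (wordProd l) 0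
      have h1 := Y_mul_entries (wordProd l) 1
      omega

/-- Difference of the two row sums; its sign detects the first letter. -/
def rowDiff (M : Matrix (Fin 2) (Fin 2) ℤ) : ℤ := (M 0 0 + M 0 1) - (M 1 0 + M 1 1)

lemma rowDiff_nil : rowDiff (wordProd []) = 0 := by
  simp [rowDiff, wordProd_nil]

lemma rowDiff_false (l : List Bool) : 0 < rowDiff (wordProd (false :: l)) := by
  have h := wordProd_pos l
  have h0 := X_mul_entries (wordProd l) 0
  have h1 := X_mul_entries (wordProd l) 1
  rw [wordProd_false, rowDiff]
  omega

lemma rowDiff_true (l : List Bool) : rowDiff (wordProd (true :: l)) < 0 := by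
  have h := wordProd_pos l
  have h0 := Y_mul_entries (wordProd l) 0
  have h1 := Y_mul_entries (wordProd l) 1
  rw [wordProd_true, rowDiff]
  omega

lemma X_cancel {M N : Matrix (Fin 2) (Fin 2) ℤ} (h : X * M = X * N) : M = N := by
  ext i j
  have hM := X_mul_entries M j
  have hN := X_mul_entries N j
  rw [h] at hM
  fin_cases i <;> simp only [Fin.zero_eta, Fin.mk_one] <;> omega

lemma Y_cancel {M N : Matrix (Fin 2) (Fin 2) ℤ} (h : Y * M = Y * N) : M = N := by
  ext i j
  have hM := Y_mul_entries M j
  have hN := Y_mul_entries N j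
  rw [h] at hM
  fin_cases i <;> simp only [Fin.zero_eta, Fin.mk_one] <;> omega

lemma wordProd_inj (l : List Bool) : ∀ m : List Bool, wordProd l = wordProd m → l = m := by
  induction l with
  | nil =>
    intro m h
    have hd := congrArg rowDiff h
    rw [rowDiff_nil] at hd
    match m with
    | [] => rfl
    | false :: m => have := rowDiff_false m; omega
    | true :: m => have := rowDiff_true m; omega
  | cons b l ih =>
    intro m h
    have hd := congrArg rowDiff h
    cases b
    · have hl := rowDiff_false l
      match m with
      | [] => rw [rowDiff_nil] at hd; omega
      | false :: m =>
        rw [wordProd_false, wordProd_false] at h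
        rw [ih m (X_cancel h)]
      | true :: m => have := rowDiff_true m; omega
    · have hl := rowDiff_true l
      match m with
      | [] => rw [rowDiff_nil] at hd; omega
      | false :: m => have := rowDiff_false m; omega
      | true :: m =>
        rw [wordProd_true, wordProd_true] at h
        rw [ih m (Y_cancel h)]

/-- The matrices `X` and `Y` generate a free semigroup: the map sending a list of
bits to the ordered product of the corresponding matrices (false ↦ X, true ↦ Y)
is injective. -/
theorem XY_free_semigroup :
    Function.Injective (fun l : List Bool =>
      (l.map (fun b => if b then Y else X)).prod) := by
  intro l m h
  exact wordProd_inj l m h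
end

section
/- Let A = ![![1,2],![0,1]], B = ![![1,0],![2,1]], C = ![![2,1],![1,1]] be 2×2 integer matrices. The map sending a list l : List (Fin 3) to the product of the corresponding matrices (0 ↦ A, 1 ↦ B, 2 ↦ C), taken in order, is injective; i.e., the semigroup generated by A, B, C in SL₂(ℤ) is free of rank 3. -/
open Matrix

def A : Matrix (Fin 2) (Fin 2) ℤ := !![1, 2; 0, 1]
def B : Matrix (Fin 2) (Fin 2) ℤ := !![1, 0; 2, 1]
def C : Matrix (Fin 2) (Fin 2) ℤ := !![2, 1; 1, 1]

/-- The image of the vector `(1, 1)` under the product of the matrices in the list. -/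
def actOne : List (Fin 3) → ℤ × ℤ
  | [] => (1, 1)
  | i :: l =>
    if i = 0 then ((actOne l).1 + 2 * (actOne l).2, (actOne l).2)
    else if i = 1 then ((actOne l).1, 2 * (actOne l).1 + (actOne l).2)
    else (2 * (actOne l).1 + (actOne l).2, (actOne l).1 + (actOne l).2)

lemma actOne_pos (l : List (Fin 3)) : 0 < (actOne l).1 ∧ 0 < (actOne l).2 := by
  induction l with
  | nil => simp [actOne]
  | cons i l ih =>
    obtain ⟨h1, h2⟩ := ih
    fin_cases i <;> simp [actOne] <;> constructor <;> omega

lemma actOne_inj (l : List (Fin 3)) : ∀ l', actOne l = actOne l' → l = l' := by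
  induction l with
  | nil =>
    intro l' h
    cases l' with
    | nil => rfl
    | cons j l' =>
      exfalso
      obtain ⟨h1, h2⟩ := actOne_pos l'
      fin_cases j <;> simp [actOne, Prod.ext_iff] at h <;> omega
  | cons i l ih =>
    intro l' h
    obtain ⟨h1, h2⟩ := actOne_pos l
    cases l' with
    | nil =>
      exfalso
      fin_cases i <;> simp [actOne, Prod.ext_iff] at h <;> omega
    | cons j l' =>
      obtain ⟨h3, h4⟩ := actOne_pos l'
      have key : i = j ∧ actOne l = actOne l' := by
        rw [Prod.ext_iff] at h ⊢
        fin_cases i <;> fin_cases j <;> simp [actOne] at h ⊢ <;> omega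
      rw [key.1, ih l' key.2]

lemma actOne_eq (l : List (Fin 3)) :
    actOne l = ((l.map (![A, B, C])).prod 0 0 + (l.map (![A, B, C])).prod 0 1,
      (l.map (![A, B, C])).prod 1 0 + (l.map (![A, B, C])).prod 1 1) := by
  induction l with
  | nil => simp [actOne]
  | cons i l ih =>
    rw [List.map_cons, List.prod_cons]
    generalize (l.map (![A, B, C])).prod = P at ih ⊢
    fin_cases i <;>
      simp [actOne, ih, A, B, C, Matrix.mul_apply, Fin.sum_univ_two] <;>
      first | (constructor <;> ring) | ring

/-- Proposition 3.1: the semigroup generated by `A`, `B`, `C` is free of rank 3,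
i.e. the map sending a list of symbols to the ordered product of the
corresponding matrices (0 ↦ A, 1 ↦ B, 2 ↦ C) is injective. -/
theorem ABC_free_semigroup :
    Function.Injective (fun l : List (Fin 3) =>
      (l.map (![A, B, C])).prod) := by
  intro l l' h
  apply actOne_inj
  rw [actOne_eq, actOne_eq]
  simp only at h
  rw [h]
end

section
/- Let X = ![![1,1],![0,1]] and Y = ![![1,0],![1,1]]. For every list of m matrices each equal to X or Y, every entry of their product (a 2×2 integer matrix) is at most Nat.fib (m+1), the (m+1)-st Fibonacci number. -/
open Matrix

theorem entry_aux (l : List (Matrix (Fin 2) (Fin 2) ℤ))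
    (h : ∀ M ∈ l, M = X ∨ M = Y) (j : Fin 2) :
    l.prod 0 j ≤ (Nat.fib (l.length + 1) : ℤ) ∧ l.prod 1 j ≤ (Nat.fib (l.length + 1) : ℤ) ∧
      l.prod 0 j + l.prod 1 j ≤ (Nat.fib (l.length + 2) : ℤ) := by
  induction l with
  | nil => fin_cases j <;> simp
  | cons M l ih =>
    obtain ⟨h0, h1, h2⟩ := ih (fun N hN => h N (List.mem_cons_of_mem _ hN))
    have hf : (Nat.fib (l.length + 3) : ℤ) = Nat.fib (l.length + 1) + Nat.fib (l.length + 2) := by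
      exact_mod_cast Nat.fib_add_two (n := l.length + 1)
    have hm : (Nat.fib (l.length + 1) : ℤ) ≤ Nat.fib (l.length + 2) := by
      exact_mod_cast Nat.fib_le_fib_succ
    have e1 : (M :: l).length + 1 = l.length + 2 := rfl
    have e2 : (M :: l).length + 2 = l.length + 3 := rfl
    rw [e1, e2, List.prod_cons]
    rcases h M List.mem_cons_self with rfl | rfl
    · simp only [Matrix.mul_apply, Fin.sum_univ_two, X, Matrix.of_apply, Matrix.cons_val_zero,
        Matrix.cons_val_one, one_mul, zero_mul, Matrix.cons_val', Matrix.cons_val_fin_one]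
      refine ⟨?_, ?_, ?_⟩ <;> linarith
    · simp only [Matrix.mul_apply, Fin.sum_univ_two, Y, Matrix.of_apply, Matrix.cons_val_zero,
        Matrix.cons_val_one, one_mul, zero_mul, Matrix.cons_val', Matrix.cons_val_fin_one]
      refine ⟨?_, ?_, ?_⟩ <;> linarith

/-- Every entry of a product of `m` matrices from `{X, Y}` is at most the
`(m+1)`-st Fibonacci number. -/
theorem entry_le_fib (l : List (Matrix (Fin 2) (Fin 2) ℤ))
    (h : ∀ M ∈ l, M = X ∨ M = Y) (i j : Fin 2) :
    l.prod i j ≤ (Nat.fib (l.length + 1) : ℤ) := by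
  obtain ⟨h0, h1, _⟩ := entry_aux l h j
  fin_cases i
  · exact h0
  · exact h1
end

section
/- Let A = ![![1,2],![0,1]], B = ![![1,0],![2,1]], C = ![![2,1],![1,1]]. For every list of n matrices each equal to A, B, or C, every entry of their product is at most Nat.fib (2n+1), and hence (as a real number) at most ((7 + 3·√5)/2)^n. -/
open Matrix

theorem fib_step (n : ℕ) : Nat.fib (2 * (n + 1) + 1) = Nat.fib (2 * n + 1) + Nat.fib (2 * n + 2) ∧
    Nat.fib (2 * (n + 1) + 2) = Nat.fib (2 * n + 1) + 2 * Nat.fib (2 * n + 2) ∧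
    Nat.fib (2 * n + 1) ≤ Nat.fib (2 * n + 2) ∧
    Nat.fib (2 * n + 2) ≤ 2 * Nat.fib (2 * n + 1) := by
  have h1 : Nat.fib (2 * n + 3) = Nat.fib (2 * n + 1) + Nat.fib (2 * n + 2) := Nat.fib_add_two
  have h2 : Nat.fib (2 * n + 4) = Nat.fib (2 * n + 2) + Nat.fib (2 * n + 3) := Nat.fib_add_two
  have h3 : Nat.fib (2 * n + 2) = Nat.fib (2 * n) + Nat.fib (2 * n + 1) := Nat.fib_add_two
  have h4 : Nat.fib (2 * n) ≤ Nat.fib (2 * n + 1) := Nat.fib_le_fib_succ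
  rw [show 2 * (n + 1) + 1 = 2 * n + 3 by ring, show 2 * (n + 1) + 2 = 2 * n + 4 by ring]
  omega

theorem col_bound (l : List (Matrix (Fin 2) (Fin 2) ℤ))
    (h : ∀ M ∈ l, M = A ∨ M = B ∨ M = C) (j : Fin 2) :
    0 ≤ l.prod 0 j ∧ 0 ≤ l.prod 1 j ∧
    l.prod 0 j ≤ (Nat.fib (2 * l.length + 1) : ℤ) ∧
    l.prod 1 j ≤ (Nat.fib (2 * l.length + 1) : ℤ) ∧
    l.prod 0 j + l.prod 1 j ≤ (Nat.fib (2 * l.length + 2) : ℤ) := by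
  induction l with
  | nil => fin_cases j <;> simp
  | cons M l ih =>
    obtain ⟨a0, b0, a1, b1, ab⟩ := ih (fun N hN => h N (List.mem_cons_of_mem _ hN))
    obtain ⟨f1, f2, f3, f4⟩ := fib_step l.length
    rw [List.length_cons, f1, f2, List.prod_cons]
    push_cast
    rcases h M List.mem_cons_self with rfl | rfl | rfl <;>
      simp [A, B, C, Matrix.mul_apply, Fin.sum_univ_two] <;> omega

theorem fib_le_real (n : ℕ) :
    (Nat.fib (2 * n + 1) : ℝ) ≤ ((7 + 3 * Real.sqrt 5) / 2) ^ n := by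
  induction n with
  | zero => simp
  | succ n ih =>
    obtain ⟨f1, -, -, f4⟩ := fib_step n
    have hs := Real.sqrt_nonneg 5
    have h3 : (3 : ℝ) ≤ (7 + 3 * Real.sqrt 5) / 2 := by linarith
    have h5 : (Nat.fib (2 * (n + 1) + 1) : ℝ) ≤ Nat.fib (2 * n + 1) * 3 := by
      exact_mod_cast (by omega : Nat.fib (2 * (n + 1) + 1) ≤ Nat.fib (2 * n + 1) * 3)
    rw [pow_succ]
    exact h5.trans (mul_le_mul ih h3 (by norm_num) (by positivity))

/-- Every entry of a product of `n` matrices from `{A, B, C}` is at most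
`Nat.fib (2n+1)`, and hence at most `((7 + 3√5)/2)^n` as a real number. -/
theorem entry_le_fib_and_real (l : List (Matrix (Fin 2) (Fin 2) ℤ))
    (h : ∀ M ∈ l, M = A ∨ M = B ∨ M = C) (i j : Fin 2) :
    l.prod i j ≤ (Nat.fib (2 * l.length + 1) : ℤ) ∧
      ((l.prod i j : ℤ) : ℝ) ≤ ((7 + 3 * Real.sqrt 5) / 2) ^ l.length := by
  have h1 : l.prod i j ≤ (Nat.fib (2 * l.length + 1) : ℤ) := by
    obtain ⟨-, -, a1, b1, -⟩ := col_bound l h j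
    fin_cases i
    · exact a1
    · exact b1
  refine ⟨h1, le_trans ?_ (fib_le_real l.length)⟩
  exact_mod_cast h1
end

section
/- Let encode : List Bool → List (Fin 3) be the cookie encoding. Then for all bit strings u, v : List Bool, encode (u ++ [false, false, false] ++ v) = encode (u ++ [false, false, false]) ++ encode v. Consequently, for the cookie hash H over any ring, H(u ++ 000 ++ v) = H(u ++ 000) · H(v). -/
open Matrix

/-- Auxiliary state machine for the cookie encoding.  The first argument is the
mode (`false` = normal, `true` = cookie), the second counts the current run of
identical bits relevant to a mode switch (consecutive 1s in normal mode,
consecutive 0s in cookie mode). -/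
def encodeAux : Bool → ℕ → List Bool → List (Fin 3)
  | _, _, [] => []
  | false, r, b :: rest =>
      if b then
        (1 : Fin 3) ::
          (if r + 1 ≥ 3 then encodeAux true 0 rest else encodeAux false (r + 1) rest)
      else
        (0 : Fin 3) :: encodeAux false 0 rest
  | true, r, b :: rest =>
      if b then
        (2 : Fin 3) :: encodeAux true 0 rest
      else
        (0 : Fin 3) ::
          (if r + 1 ≥ 3 then encodeAux false 0 rest else encodeAux true (r + 1) rest)

/-- The cookie encoding: in normal mode, 0 ↦ 0 and 1 ↦ 1, switching to cookie
mode after three consecutive 1 bits; in cookie mode, 0 ↦ 0 and 1 ↦ 2, switching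
back to normal mode after three consecutive 0 bits. -/
def encode : List Bool → List (Fin 3) :=
  encodeAux false 0

/-- The cookie hash: the ordered product of the matrices `A`, `B`, `C`
corresponding to the symbols 0, 1, 2 of the cookie encoding. -/
def H (u : List Bool) : Matrix (Fin 2) (Fin 2) ℤ :=
  ((encode u).map (![A, B, C])).prod

/-- The cookie hash with entries in an arbitrary ring `R`. -/
def Hgen (R : Type*) [Ring R] (u : List Bool) : Matrix (Fin 2) (Fin 2) R :=
  ((encode u).map (fun s => ((![A, B, C]) s).map (Int.cast : ℤ → R))).prod

theorem encodeAux_append_padding (u v : List Bool) : ∀ (m : Bool) (r : ℕ),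
    encodeAux m r (u ++ [false, false, false] ++ v) =
      encodeAux m r (u ++ [false, false, false]) ++ encodeAux false 0 v := by
  induction u with
  | nil =>
    intro m r
    cases m
    · simp [encodeAux]
    · simp only [List.nil_append, List.cons_append, encodeAux]
      split_ifs <;> first | omega | simp_all [encodeAux]
  | cons b u ih =>
    intro m r
    simp only [List.cons_append, List.append_assoc, List.nil_append] at ih ⊢
    cases m <;> cases b <;> simp only [encodeAux] <;> split_ifs <;> simp_all

/-- Padding property: appending three 0 bits resets the encoding state, so the
encoding (and hence the cookie hash, over any ring) is multiplicative across a
`000` padding block. -/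
theorem encode_append_padding :
    (∀ u v : List Bool,
      encode (u ++ [false, false, false] ++ v) =
        encode (u ++ [false, false, false]) ++ encode v) ∧
    (∀ (R : Type*) [Ring R] (u v : List Bool),
      Hgen R (u ++ [false, false, false] ++ v) =
        Hgen R (u ++ [false, false, false]) * Hgen R v) := by
  have h : ∀ u v : List Bool,
      encode (u ++ [false, false, false] ++ v) =
        encode (u ++ [false, false, false]) ++ encode v :=
    fun u v => encodeAux_append_padding u v false 0
  refine ⟨h, ?_⟩
  intro R _ u v
  unfold Hgen
  rw [h, List.map_append, List.prod_append]
end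

section
/- The cookie encoding encode : List Bool → List (Fin 3) is injective, and moreover the cookie hash H : List Bool → Matrix (Fin 2) (Fin 2) ℤ is injective: if H(u) = H(v) as integer matrices, then u = v. -/
open Matrix

theorem encodeAux_inj (u : List Bool) : ∀ (m : Bool) (r : ℕ) (v : List Bool),
    encodeAux m r u = encodeAux m r v → u = v := by
  induction u with
  | nil =>
    intro m r v h
    cases v with
    | nil => rfl
    | cons b v => cases m <;> cases b <;> simp [encodeAux] at h
  | cons a u ih =>
    intro m r v h
    cases v with
    | nil => cases m <;> cases a <;> simp [encodeAux] at h
    | cons b v =>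
      cases m <;> cases a <;> cases b <;> simp [encodeAux] at h ⊢ <;>
        first
        | exact ih _ _ _ h
        | (split_ifs at h <;> exact ih _ _ _ h)

/-- The vector obtained by applying the product of a word to `(1, 1)`. -/
def wordVec : List (Fin 3) → ℤ × ℤ
  | [] => (1, 1)
  | s :: l =>
    if s = 0 then ((wordVec l).1 + 2 * (wordVec l).2, (wordVec l).2)
    else if s = 1 then ((wordVec l).1, 2 * (wordVec l).1 + (wordVec l).2)
    else (2 * (wordVec l).1 + (wordVec l).2, (wordVec l).1 + (wordVec l).2)

theorem wordVec_eq (l : List (Fin 3)) :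
    (l.map (![A, B, C])).prod *ᵥ ![1, 1] = ![(wordVec l).1, (wordVec l).2] := by
  induction l with
  | nil => simp [wordVec]
  | cons s l ih =>
    rw [List.map_cons, List.prod_cons, ← Matrix.mulVec_mulVec, ih]
    fin_cases s <;> ext i <;> fin_cases i <;>
      simp [wordVec, A, B, C, Matrix.mulVec, dotProduct, Fin.sum_univ_two]

theorem wordVec_pos (l : List (Fin 3)) : 0 < (wordVec l).1 ∧ 0 < (wordVec l).2 := by
  induction l with
  | nil => simp [wordVec]
  | cons s l ih =>
    obtain ⟨h1, h2⟩ := ih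
    fin_cases s <;> simp [wordVec] <;> omega

theorem wordVec_inj (l : List (Fin 3)) : ∀ k, wordVec l = wordVec k → l = k := by
  induction l with
  | nil =>
    intro k h
    cases k with
    | nil => rfl
    | cons t k =>
      exfalso
      have hk := wordVec_pos k
      fin_cases t <;> simp [wordVec, Prod.ext_iff] at h <;> omega
  | cons s l ih =>
    intro k h
    have hl := wordVec_pos l
    cases k with
    | nil =>
      exfalso
      fin_cases s <;> simp [wordVec, Prod.ext_iff] at h <;> omega
    | cons t k =>
      have hk := wordVec_pos k
      have key : s = t ∧ wordVec l = wordVec k := by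
        rw [Prod.ext_iff] at h ⊢
        fin_cases s <;> fin_cases t <;> simp [wordVec] at h ⊢ <;> omega
      rw [key.1, ih k key.2]

/-- The cookie encoding is injective, and moreover the cookie hash itself is
injective as a map to 2×2 integer matrices. -/
theorem encode_and_hash_injective :
    Function.Injective encode ∧ Function.Injective H := by
  have he : Function.Injective encode := fun u v h => encodeAux_inj u false 0 v h
  refine ⟨he, fun u v h => he (wordVec_inj _ _ ?_)⟩
  have h2 : H u *ᵥ ![1, 1] = H v *ᵥ ![1, 1] := by rw [h]
  unfold H at h2
  rw [wordVec_eq, wordVec_eq] at h2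
  exact Prod.ext (by simpa using congrFun h2 0) (by simpa using congrFun h2 1)
end

section
/- Let p be a prime and suppose n satisfies Nat.fib (2n+1) < p. Then the cookie hash over 𝔽_p has no collisions among short strings: for any two distinct bit strings u ≠ v, each of length at most n, the matrices H(u) and H(v) reduced entrywise modulo p (as matrices over ZMod p) are distinct. -/
open Matrix

theorem encodeAux_length (u : List Bool) : ∀ (m : Bool) (r : ℕ),
    (encodeAux m r u).length = u.length := by
  induction u with
  | nil => intro m r; simp [encodeAux]
  | cons a u ih =>
    intro m r
    cases m <;> cases a <;> simp [encodeAux, ih] <;> split_ifs <;> simp [ih]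

/-- Product of the matrices attached to a symbol string. -/
def symProd (l : List (Fin 3)) : Matrix (Fin 2) (Fin 2) ℤ :=
  (l.map (![A, B, C])).prod

theorem symProd_zero (l : List (Fin 3)) (j : Fin 2) :
    symProd (0 :: l) 0 j = symProd l 0 j + 2 * symProd l 1 j ∧
    symProd (0 :: l) 1 j = symProd l 1 j := by
  simp [symProd, A, Matrix.mul_apply, Fin.sum_univ_two]

theorem symProd_one (l : List (Fin 3)) (j : Fin 2) :
    symProd (1 :: l) 0 j = symProd l 0 j ∧
    symProd (1 :: l) 1 j = 2 * symProd l 0 j + symProd l 1 j := by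
  simp [symProd, B, Matrix.mul_apply, Fin.sum_univ_two]

theorem symProd_two (l : List (Fin 3)) (j : Fin 2) :
    symProd (2 :: l) 0 j = 2 * symProd l 0 j + symProd l 1 j ∧
    symProd (2 :: l) 1 j = symProd l 0 j + symProd l 1 j := by
  simp [symProd, C, Matrix.mul_apply, Fin.sum_univ_two]

theorem symProd_bound (l : List (Fin 3)) (j : Fin 2) :
    0 ≤ symProd l 0 j ∧ 0 ≤ symProd l 1 j ∧
    symProd l 0 j ≤ Nat.fib (2 * l.length + 1) ∧
    symProd l 1 j ≤ Nat.fib (2 * l.length + 1) ∧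
    symProd l 0 j + symProd l 1 j ≤ Nat.fib (2 * l.length + 2) := by
  induction l with
  | nil => fin_cases j <;> simp [symProd]
  | cons a l ih =>
    obtain ⟨h0, h1, h2, h3, h4⟩ := ih
    have e1 : Nat.fib (2 * (a :: l).length + 1)
        = Nat.fib (2 * l.length + 1) + Nat.fib (2 * l.length + 2) := by
      rw [List.length_cons, show 2 * (l.length + 1) + 1 = (2 * l.length + 1) + 2 by ring,
        Nat.fib_add_two]
    have e2 : Nat.fib (2 * (a :: l).length + 2)
        = Nat.fib (2 * l.length + 2) + Nat.fib (2 * (a :: l).length + 1) := by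
      rw [List.length_cons, show 2 * (l.length + 1) + 2 = (2 * l.length + 2) + 2 by ring,
        Nat.fib_add_two]
      rfl
    have e3 : Nat.fib (2 * l.length + 1) ≤ Nat.fib (2 * l.length + 2) := Nat.fib_le_fib_succ
    rw [e2, e1]
    clear e1 e2
    zify at e3 ⊢
    have z := symProd_zero l j
    have o := symProd_one l j
    have t := symProd_two l j
    fin_cases a <;> simp only [Fin.zero_eta, Fin.mk_one, Fin.reduceFinMk] <;>
      refine ⟨?_, ?_, ?_, ?_, ?_⟩ <;> linarith [z.1, z.2, o.1, o.2, t.1, t.2]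

theorem symProd_det (l : List (Fin 3)) :
    symProd l 0 0 * symProd l 1 1 - symProd l 0 1 * symProd l 1 0 = 1 := by
  induction l with
  | nil => simp [symProd]
  | cons a l ih =>
    fin_cases a <;> simp only [Fin.zero_eta, Fin.mk_one, Fin.reduceFinMk]
    · rw [(symProd_zero l 0).1, (symProd_zero l 0).2, (symProd_zero l 1).1, (symProd_zero l 1).2]
      linarith
    · rw [(symProd_one l 0).1, (symProd_one l 0).2, (symProd_one l 1).1, (symProd_one l 1).2]
      linarith
    · rw [(symProd_two l 0).1, (symProd_two l 0).2, (symProd_two l 1).1, (symProd_two l 1).2]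
      linarith

/-- Conditions on a column forced by the first symbol. -/
def headCond : List (Fin 3) → ℤ → ℤ → Prop
  | [], _, _ => True
  | a :: _, x, y => (a = 0 → 2 * y ≤ x) ∧ (a = 1 → 2 * x ≤ y) ∧ (a = 2 → y ≤ x ∧ x ≤ 2 * y)

theorem symProd_headCond (l : List (Fin 3)) (j : Fin 2) :
    headCond l (symProd l 0 j) (symProd l 1 j) := by
  cases l with
  | nil => trivial
  | cons a l =>
    obtain ⟨h0, h1, -⟩ := symProd_bound l j
    have z := symProd_zero l j
    have o := symProd_one l j
    have t := symProd_two l j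
    refine ⟨?_, ?_, ?_⟩ <;> rintro rfl
    · linarith
    · linarith
    · constructor <;> linarith

theorem symProd_nil_ne (a : Fin 3) (l : List (Fin 3)) (h : symProd [] = symProd (a :: l)) :
    False := by
  have c0 := symProd_headCond (a :: l) 0
  have c1 := symProd_headCond (a :: l) 1
  rw [← h] at c0 c1
  fin_cases a <;> simp [headCond, symProd] at c0 c1

theorem symProd_head (a b : Fin 3) (l k : List (Fin 3))
    (h : symProd (a :: l) = symProd (b :: k)) : a = b := by
  have c0 := symProd_headCond (a :: l) 0
  have c1 := symProd_headCond (a :: l) 1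
  have d0 := symProd_headCond (b :: k) 0
  have d1 := symProd_headCond (b :: k) 1
  obtain ⟨n0, m0, -⟩ := symProd_bound (a :: l) 0
  obtain ⟨n1, m1, -⟩ := symProd_bound (a :: l) 1
  have hd := symProd_det (a :: l)
  rw [← h] at d0 d1
  generalize symProd (a :: l) = M at *
  generalize M 0 0 = x at *
  generalize M 0 1 = y at *
  generalize M 1 0 = z at *
  generalize M 1 1 = w at *
  by_contra hab
  have key : (x = 0 ∧ y = 0) ∨ (z = 0 ∧ w = 0) ∨ (x = 2 * z ∧ y = 2 * w) := by
    fin_cases a <;> fin_cases b <;> simp [headCond] at c0 c1 d0 d1 hab <;> omega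
  rcases key with ⟨rfl, rfl⟩ | ⟨rfl, rfl⟩ | ⟨rfl, rfl⟩
  · simp at hd
  · simp at hd
  · have : (0 : ℤ) = 1 := by linarith
    omega

theorem symProd_inj (l : List (Fin 3)) : ∀ k, symProd l = symProd k → l = k := by
  induction l with
  | nil =>
    intro k h
    cases k with
    | nil => rfl
    | cons b k => exact (symProd_nil_ne b k h).elim
  | cons a l ih =>
    intro k h
    cases k with
    | nil => exact (symProd_nil_ne a l h.symm).elim
    | cons b k =>
      obtain rfl := symProd_head a b l k h
      congr 1
      apply ih
      have e : ∀ j, symProd l 0 j = symProd k 0 j ∧ symProd l 1 j = symProd k 1 j := by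
        intro j
        have h0 := congrFun (congrFun h 0) j
        have h1 := congrFun (congrFun h 1) j
        have z := symProd_zero l j
        have o := symProd_one l j
        have t := symProd_two l j
        have z' := symProd_zero k j
        have o' := symProd_one k j
        have t' := symProd_two k j
        fin_cases a <;> simp only [Fin.zero_eta, Fin.mk_one, Fin.reduceFinMk] at h0 h1 <;>
          constructor <;> linarith
      ext i j
      fin_cases i
      · exact (e j).1
      · exact (e j).2

theorem H_bound (n : ℕ) (u : List Bool) (hu : u.length ≤ n) (i j : Fin 2) :
    0 ≤ H u i j ∧ H u i j ≤ Nat.fib (2 * n + 1) := by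
  obtain ⟨h0, h1, h2, h3, -⟩ := symProd_bound (encode u) j
  have hl : (encode u).length = u.length := encodeAux_length u _ _
  have hm : (Nat.fib (2 * (encode u).length + 1) : ℤ) ≤ Nat.fib (2 * n + 1) := by
    exact_mod_cast Nat.fib_mono (by omega)
  change 0 ≤ symProd (encode u) i j ∧ symProd (encode u) i j ≤ _
  fin_cases i
  · exact ⟨h0, h2.trans hm⟩
  · exact ⟨h1, h3.trans hm⟩

/-- No collisions of the cookie hash over `𝔽_p` among short strings: if
`Nat.fib (2n+1) < p` then distinct bit strings of length at most `n` have
distinct hashes modulo `p`. -/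
theorem cookie_hash_no_short_collisions (p : ℕ) (hp : p.Prime) (n : ℕ)
    (hfib : Nat.fib (2 * n + 1) < p)
    (u v : List Bool) (hu : u.length ≤ n) (hv : v.length ≤ n) (hne : u ≠ v) :
    (H u).map (Int.cast : ℤ → ZMod p) ≠ (H v).map (Int.cast : ℤ → ZMod p) := by
  intro h
  apply hne
  apply encodeAux_inj u false 0 v
  apply symProd_inj
  change H u = H v
  ext i j
  have hij : ((H u i j : ℤ) : ZMod p) = ((H v i j : ℤ) : ZMod p) := congrFun (congrFun h i) j
  obtain ⟨a0, a1⟩ := H_bound n u hu i j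
  obtain ⟨b0, b1⟩ := H_bound n v hv i j
  have hf : (Nat.fib (2 * n + 1) : ℤ) < p := by exact_mod_cast hfib
  have hm := (ZMod.intCast_eq_intCast_iff' _ _ p).1 hij
  rwa [Int.emod_eq_of_lt a0 (by linarith), Int.emod_eq_of_lt b0 (by linarith)] at hm
end

section
/- If a bit string u : List Bool contains no three consecutive 1 bits (i.e., [true, true, true] is not a contiguous infix of u), then its cookie encoding uses only the symbols 0 and 1: encode u = u.map (fun b => if b then (1 : Fin 3) else 0). Consequently, the cookie hash of u equals the ordinary two-generator Cayley hash of u, i.e., the ordered product of A for each 0 bit and B for each 1 bit. -/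
open Matrix

theorem encodeAux_aux (u : List Bool) : ∀ r : ℕ, r ≤ 2 →
    ¬ [true, true, true] <:+: (List.replicate r true ++ u) →
    encodeAux false r u = u.map (fun b => if b then (1 : Fin 3) else 0) := by
  induction u with
  | nil => intro r _ _; simp [encodeAux]
  | cons b rest ih =>
    intro r hr h
    cases b with
    | false =>
      have h0 : ¬ [true, true, true] <:+: (List.replicate 0 true ++ rest) := by
        intro hc
        apply h
        obtain ⟨s, t, hst⟩ := hc
        refine ⟨List.replicate r true ++ false :: s, t, ?_⟩
        simp at hst
        simp [← hst]
      simp [encodeAux, ih 0 (by omega) h0]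
    | true =>
      have h1 : List.replicate r true ++ true :: rest
          = List.replicate (r + 1) true ++ rest := by
        simp [List.replicate_succ']
      rw [h1] at h
      by_cases h2 : r = 2
      · subst h2
        exact absurd ⟨[], rest, by simp [List.replicate]⟩ h
      · have h3 : ¬ (r + 1 ≥ 3) := by omega
        have := ih (r + 1) (by omega) h
        simp only [encodeAux, if_neg h3, this, List.map_cons, if_true]

/-- If a bit string contains no three consecutive 1 bits, then its cookie
encoding uses only the symbols 0 and 1, and its cookie hash coincides with the
ordinary two-generator Cayley hash (0 ↦ A, 1 ↦ B). -/
theorem encode_no_triple_ones (u : List Bool)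
    (h : ¬ [true, true, true] <:+: u) :
    encode u = u.map (fun b => if b then (1 : Fin 3) else 0) ∧
    H u = (u.map (fun b => if b then B else A)).prod := by
  have key : encode u = u.map (fun b => if b then (1 : Fin 3) else 0) :=
    encodeAux_aux u 0 (by omega) (by simpa using h)
  refine ⟨key, ?_⟩
  unfold H
  rw [key, List.map_map]
  congr 1
  apply List.map_congr_left
  intro b _
  cases b <;> simp
end

section
/- Let M = ![![5,2],![2,1]]. For every natural number n and all indices i, j ∈ Fin 2, the entry (M^n) i j is at most (M^n) 0 0; i.e., the (0,0) entry is the largest entry of M^n. -/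
open Matrix

def M : Matrix (Fin 2) (Fin 2) ℤ := !![5, 2; 2, 1]

lemma M_pow_inv (n : ℕ) : (M ^ n) 1 0 = (M ^ n) 0 1 ∧
    (M ^ n) 0 0 = (M ^ n) 1 1 + 2 * (M ^ n) 0 1 ∧ 0 ≤ (M ^ n) 0 1 ∧ 0 ≤ (M ^ n) 1 1 := by
  induction n with
  | zero => simp
  | succ k ih =>
    obtain ⟨h1, h2, h3, h4⟩ := ih
    have e (i j : Fin 2) : (M ^ (k + 1)) i j = (M ^ k) i 0 * M 0 j + (M ^ k) i 1 * M 1 j := by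
      rw [pow_succ, Matrix.mul_apply, Fin.sum_univ_two]
    have m00 : M 0 0 = 5 := rfl
    have m01 : M 0 1 = 2 := rfl
    have m10 : M 1 0 = 2 := rfl
    have m11 : M 1 1 = 1 := rfl
    simp only [e, m00, m01, m10, m11]
    refine ⟨?_, ?_, ?_, ?_⟩ <;> linarith

/-- The `(0,0)` entry is the largest entry of every power of `M = !![5,2;2,1]`. -/
theorem M_pow_entry_max (n : ℕ) (i j : Fin 2) :
    (M ^ n) i j ≤ (M ^ n) 0 0 := by
  obtain ⟨h1, h2, h3, h4⟩ := M_pow_inv n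
  have a : (M ^ n) 0 1 ≤ (M ^ n) 0 0 := by linarith
  have b : (M ^ n) 1 0 ≤ (M ^ n) 0 0 := by linarith
  have c : (M ^ n) 1 1 ≤ (M ^ n) 0 0 := by linarith
  fin_cases i <;> fin_cases j
  · exact le_refl _
  · exact a
  · exact b
  · exact c
end

section
/- Let k ≥ 1 be an integer, A(k) = ![![1,k],![0,1]] and B(k) = ![![1,0],![k,1]]. For every list of 2j matrices each equal to A(k) or B(k), every entry of their product is at most the (0,0) entry of (A(k)·B(k))^j. In other words, among all products of 2j matrices from {A(k), B(k)}, the maximal entry is achieved by the alternating product (A(k)B(k))^j. -/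
open Matrix

def Ak (k : ℤ) : Matrix (Fin 2) (Fin 2) ℤ := !![1, k; 0, 1]
def Bk (k : ℤ) : Matrix (Fin 2) (Fin 2) ℤ := !![1, 0; k, 1]

/-- Generalized Fibonacci numbers: `f 0 = 0`, `f 1 = 1`, `f (n+2) = k f (n+1) + f n`. -/
def kfib (k : ℤ) : ℕ → ℤ
  | 0 => 0
  | 1 => 1
  | n + 2 => k * kfib k (n + 1) + kfib k n

lemma kfib_mono (k : ℤ) (hk : 1 ≤ k) (n : ℕ) :
    0 ≤ kfib k n ∧ kfib k n ≤ kfib k (n + 1) := by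
  induction n with
  | zero => simp [kfib]
  | succ n ih =>
    obtain ⟨h0, h1⟩ := ih
    refine ⟨by linarith, ?_⟩
    simp only [kfib]
    nlinarith

lemma alt_pow (k : ℤ) (j : ℕ) :
    ((Ak k * Bk k) ^ j) 0 0 = kfib k (2 * j + 1) ∧
    ((Ak k * Bk k) ^ j) 1 0 = kfib k (2 * j) := by
  induction j with
  | zero => simp [kfib]
  | succ j ih =>
    obtain ⟨h0, h1⟩ := ih
    rw [pow_succ', Matrix.mul_apply, Matrix.mul_apply]
    simp only [Fin.sum_univ_two, h0, h1]
    have e : 2 * (j + 1) = 2 * j + 2 := by ring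
    rw [e]
    simp only [kfib, Ak, Bk, Matrix.mul_apply, Fin.sum_univ_two]
    constructor <;> simp <;> ring

lemma step_bound {k x y a b : ℤ} (hk : 1 ≤ k) (hab : a ≤ b)
    (hx : x ≤ b) (hy : y ≤ b) (h : x ≤ a ∨ y ≤ a) : x + k * y ≤ k * b + a := by
  rcases h with h | h <;> nlinarith

lemma prod_bound (k : ℤ) (hk : 1 ≤ k) (i : Fin 2) (l : List (Matrix (Fin 2) (Fin 2) ℤ))
    (h : ∀ M ∈ l, M = Ak k ∨ M = Bk k) :
    l.prod 0 i ≤ kfib k (l.length + 1) ∧ l.prod 1 i ≤ kfib k (l.length + 1) ∧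
    (l.prod 0 i ≤ kfib k l.length ∨ l.prod 1 i ≤ kfib k l.length) := by
  induction l with
  | nil => fin_cases i <;> simp [kfib]
  | cons M l ih =>
    obtain ⟨h0, h1, h2⟩ := ih (fun N hN => h N (List.mem_cons_of_mem _ hN))
    have hm := (kfib_mono k hk l.length).2
    have hm' := (kfib_mono k hk (l.length + 1)).2
    have s1 := step_bound hk hm h0 h1 h2
    have s2 := step_bound hk hm h1 h0 h2.symm
    rw [List.prod_cons, List.length_cons, Matrix.mul_apply, Matrix.mul_apply]
    simp only [kfib] at hm' ⊢
    rcases h M List.mem_cons_self with rfl | rfl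
    · simp [Ak, Fin.sum_univ_two]
      exact ⟨s1, by linarith, Or.inr h1⟩
    · simp [Bk, Fin.sum_univ_two]
      exact ⟨by linarith, by linarith, Or.inl h0⟩

/-- Bromberg–Shpilrain–Vdovina: among all products of `2j` matrices from
`{A(k), B(k)}` with `k ≥ 1`, the maximal entry is achieved by the alternating
product `(A(k)·B(k))^j`, namely by its `(0,0)` entry. -/
theorem alternating_product_maximal (k : ℤ) (hk : 1 ≤ k) (j : ℕ)
    (l : List (Matrix (Fin 2) (Fin 2) ℤ)) (hlen : l.length = 2 * j)
    (h : ∀ M ∈ l, M = Ak k ∨ M = Bk k) (i i' : Fin 2) :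
    l.prod i i' ≤ ((Ak k * Bk k) ^ j) 0 0 := by
  obtain ⟨h0, h1, -⟩ := prod_bound k hk i' l h
  rw [(alt_pow k j).1, ← hlen]
  fin_cases i
  · exact h0
  · exact h1
end

section
/- For every n ≥ 3, every entry of the 2×2 integer matrix B³ · C^{n−3}, where B = ![![1,0],![2,1]] and C = ![![2,1],![1,1]], is at most Nat.fib (2n+1), and hence (as a real number) at most ((7 + 3·√5)/2)^n. -/
open Matrix

lemma C_pow_eq (k : ℕ) : C ^ k = !![(Nat.fib (2*k+1) : ℤ), (Nat.fib (2*k) : ℤ);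
    (Nat.fib (2*k) : ℤ), (Nat.fib (2*k+1) : ℤ) - (Nat.fib (2*k) : ℤ)] := by
  induction k with
  | zero => ext i j; fin_cases i <;> fin_cases j <;> simp
  | succ k ih =>
    have h2 : Nat.fib (2*(k+1)) = Nat.fib (2*k) + Nat.fib (2*k+1) := Nat.fib_add_two
    have h3 : Nat.fib (2*(k+1)+1) = Nat.fib (2*k+1) + Nat.fib (2*(k+1)) := Nat.fib_add_two
    rw [pow_succ, ih, h3, h2]
    ext i j
    fin_cases i <;> fin_cases j <;> simp [C, Matrix.mul_apply, Fin.sum_univ_two] <;> ring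

lemma B_cube_eq : B ^ 3 = !![1, 0; 6, 1] := by
  unfold B
  decide

lemma fib_odd_le (m : ℕ) : Nat.fib (2*m+1) ≤ 3 ^ m := by
  induction m with
  | zero => simp
  | succ m ih =>
    have h2 : Nat.fib (2*m+2) = Nat.fib (2*m) + Nat.fib (2*m+1) := Nat.fib_add_two
    have h3 : Nat.fib (2*(m+1)+1) = Nat.fib (2*m+1) + Nat.fib (2*m+2) := Nat.fib_add_two
    have h4 : Nat.fib (2*m) ≤ Nat.fib (2*m+1) := Nat.fib_mono (by omega)
    rw [pow_succ]
    omega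

/-- For `n ≥ 3`, every entry of `B³ · C^(n−3)` (the cookie hash of the all-ones
string of length `n`) is at most `Nat.fib (2n+1)`, hence at most
`((7 + 3√5)/2)^n` as a real number. -/
theorem all_ones_hash_entry_bound (n : ℕ) (hn : 3 ≤ n) (i j : Fin 2) :
    (B ^ 3 * C ^ (n - 3)) i j ≤ (Nat.fib (2 * n + 1) : ℤ) ∧
      (((B ^ 3 * C ^ (n - 3)) i j : ℤ) : ℝ) ≤ ((7 + 3 * Real.sqrt 5) / 2) ^ n := by
  have key : (B ^ 3 * C ^ (n - 3)) i j ≤ (Nat.fib (2 * n + 1) : ℤ) := by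
    obtain ⟨k, rfl⟩ := Nat.exists_eq_add_of_le' hn
    have h2 : Nat.fib (2*k+2) = Nat.fib (2*k) + Nat.fib (2*k+1) := Nat.fib_add_two
    have h3 : Nat.fib (2*k+3) = Nat.fib (2*k+1) + Nat.fib (2*k+2) := Nat.fib_add_two
    have h4 : Nat.fib (2*k+4) = Nat.fib (2*k+2) + Nat.fib (2*k+3) := Nat.fib_add_two
    have h5 : Nat.fib (2*k+5) = Nat.fib (2*k+3) + Nat.fib (2*k+4) := Nat.fib_add_two
    have h6 : Nat.fib (2*k+6) = Nat.fib (2*k+4) + Nat.fib (2*k+5) := Nat.fib_add_two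
    have h7 : Nat.fib (2*(k+3)+1) = Nat.fib (2*k+5) + Nat.fib (2*k+6) := Nat.fib_add_two
    rw [Nat.add_sub_cancel, B_cube_eq, C_pow_eq]
    fin_cases i <;> fin_cases j <;> simp [Matrix.mul_apply, Fin.sum_univ_two] <;> omega
  refine ⟨key, ?_⟩
  have h1 : (((B ^ 3 * C ^ (n - 3)) i j : ℤ) : ℝ) ≤ (Nat.fib (2 * n + 1) : ℝ) := by
    exact_mod_cast key
  have h2 : (Nat.fib (2 * n + 1) : ℝ) ≤ 3 ^ n := by exact_mod_cast fib_odd_le n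
  have h3 : (3 : ℝ) ^ n ≤ ((7 + 3 * Real.sqrt 5) / 2) ^ n := by
    apply pow_le_pow_left₀ (by norm_num)
    have := Real.sqrt_nonneg 5
    linarith
  exact h1.trans (h2.trans h3)
end

section
/- Let X = ![![1,1],![0,1]] and Y = ![![1,0],![1,1]]. For every n ≥ 1, (X·Y)^n has all entries positive, and its largest entry is Nat.fib (2n+1), which as a real number satisfies Nat.fib (2n+1) ≤ ((3 + √5)/2)^n · ((1+√5)/2). -/
open Matrix

theorem XY_pow_eq (n : ℕ) : (X * Y) ^ n =
    !![(Nat.fib (2 * n + 1) : ℤ), (Nat.fib (2 * n) : ℤ);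
       (Nat.fib (2 * n) : ℤ), (Nat.fib (2 * n + 1) : ℤ) - (Nat.fib (2 * n) : ℤ)] := by
  induction n with
  | zero => ext i j; fin_cases i <;> fin_cases j <;> simp
  | succ k ih =>
    have h2 : Nat.fib (2 * (k + 1)) = Nat.fib (2 * k) + Nat.fib (2 * k + 1) := Nat.fib_add_two
    have h3 : Nat.fib (2 * (k + 1) + 1) = Nat.fib (2 * k + 1) + Nat.fib (2 * (k + 1)) :=
      Nat.fib_add_two
    rw [pow_succ, ih, h3, h2]
    ext i j
    fin_cases i <;> fin_cases j <;> simp [X, Y, Matrix.mul_apply, Fin.sum_univ_two] <;> ring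

/-- For `n ≥ 1`, the matrix `(X·Y)^n` has all entries positive, its largest
entry equals `Nat.fib (2n+1)`, and as a real number
`Nat.fib (2n+1) ≤ ((3+√5)/2)^n · ((1+√5)/2)`. -/
theorem XY_pow_largest_entry (n : ℕ) (hn : 1 ≤ n) :
    (∀ i j : Fin 2, 0 < ((X * Y) ^ n) i j) ∧
    (∀ i j : Fin 2, ((X * Y) ^ n) i j ≤ (Nat.fib (2 * n + 1) : ℤ)) ∧
    (∃ i j : Fin 2, ((X * Y) ^ n) i j = (Nat.fib (2 * n + 1) : ℤ)) ∧
    ((Nat.fib (2 * n + 1) : ℝ) ≤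
      ((3 + Real.sqrt 5) / 2) ^ n * ((1 + Real.sqrt 5) / 2)) := by
  obtain ⟨m, rfl⟩ : ∃ m, n = m + 1 := ⟨n - 1, by omega⟩
  have h3 : Nat.fib (2 * (m + 1) + 1) = Nat.fib (2 * m + 1) + Nat.fib (2 * (m + 1)) :=
    Nat.fib_add_two
  have p1 : 0 < Nat.fib (2 * m + 1) := Nat.fib_pos.2 (by omega)
  have p2 : 0 < Nat.fib (2 * (m + 1)) := Nat.fib_pos.2 (by omega)
  rw [XY_pow_eq]
  refine ⟨?_, ?_, ⟨0, 0, by simp⟩, ?_⟩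
  · intro i j
    fin_cases i <;> fin_cases j <;> simp <;> omega
  · intro i j
    fin_cases i <;> fin_cases j <;> simp <;> omega
  · have h := Real.goldenRatio_mul_fib_succ_add_fib (2 * (m + 1))
    have h1 := Real.one_lt_goldenRatio
    have hsq : (3 + Real.sqrt 5) / 2 = Real.goldenRatio ^ 2 := by
      rw [Real.goldenRatio_sq, Real.goldenRatio]; ring
    have hg : (1 + Real.sqrt 5) / 2 = Real.goldenRatio := rfl
    rw [hsq, hg, ← pow_mul, ← pow_succ, ← h]
    have a : (0 : ℝ) ≤ Nat.fib (2 * (m + 1) + 1) := Nat.cast_nonneg _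
    have b : (0 : ℝ) ≤ Nat.fib (2 * (m + 1)) := Nat.cast_nonneg _
    nlinarith
end
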